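/- arXiv:1810.09287 — 4 statements merged into one kernel-verified Lean document; each statement's English description precedes it below -/
import Mathlib

section
/- Let A = (A,Q,δ,I,F) be an NFA over an alphabet A and let P = (τ: 𝔼* → T, G) be a tagging compatible with A, of size n = |T|. Then there exists a monoid morphism α: (A ∪ 𝔼)* → M into a finite monoid M which recognizes the language L[A,P] and satisfies |M| ≤ n + |A| · n² · (|Q|² + 2). -/
/-! Infrastructure: NFAs with an explicit finite set of transitions, taggings over the
two-letter alphabet `𝔼 = Bool`, the relabeled NFA `A[P]`, the languages `K[A,P]` and
`L[A,P]`, and recognition of a language by a monoid morphism. The disjoint union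
`A ∪ 𝔼` is modelled as the sum type `A ⊕ Bool`. -/

/-- A nondeterministic finite automaton with a finite set `trans` of transitions. -/
structure NFA' (A Q : Type) where
  trans : Finset (Q × A × Q)
  start : Finset Q
  accept : Finset Q

namespace NFA'

variable {A Q T : Type}

/-- `Path M q w r` : the word `w` labels a run from state `q` to state `r`. -/
inductive Path (M : NFA' A Q) : Q → List A → Q → Prop
  | nil (q : Q) : Path M q [] q
  | cons {q r s : Q} {a : A} {w : List A} :
      (q, a, r) ∈ M.trans → Path M r w s → Path M q (a :: w) s

/-- The language recognized by an NFA. -/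
def lang (M : NFA' A Q) : Language A :=
  {w | ∃ q ∈ M.start, ∃ r ∈ M.accept, M.Path q w r}

/-- The NFA `A[P]`: each transition gets relabeled by a distinct letter of `A × T`;
the choice of distinct tags for the transitions (coming from the fixed linear orders on
`δ` and `G`) is recorded by the injection `ι`. -/
def relabel [DecidableEq Q] [DecidableEq A] [DecidableEq T]
    (M : NFA' A Q) (ι : {x // x ∈ M.trans} → T) : NFA' (A × T) Q where
  trans := M.trans.attach.image (fun x => (x.1.1, (x.1.2.1, ι x), x.1.2.2))
  start := M.start
  accept := M.accept

end NFA'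

/-- A morphism `α : A* → M` recognizes `L` when `L = α⁻¹(F)` for some `F ⊆ M`. -/
def Recognizes {A M : Type} [Monoid M] (α : FreeMonoid A →* M) (L : Language A) : Prop :=
  ∃ F : Set M, L = {w : List A | α (FreeMonoid.ofList w) ∈ F}

/-- The language `K[A,P] ⊆ (A × T)*` recognized by the relabeled NFA `A[P]`. -/
def KAP {A Q T : Type} [DecidableEq Q] [DecidableEq A] [DecidableEq T]
    (M : NFA' A Q) (ι : {x // x ∈ M.trans} → T) : Language (A × T) :=
  (M.relabel ι).lang

/-- The language `L[A,P] = 𝔼* · μ⁻¹(K[A,P]) ⊆ (A ∪ 𝔼)*`, where a word of `(A𝔼*)*` is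
(uniquely) decomposed as `a₁w₁ ⋯ aₘwₘ` (`aⱼ ∈ A`, `wⱼ ∈ 𝔼*`) and
`μ(a₁w₁ ⋯ aₘwₘ) = (a₁,τ(w₁)) ⋯ (aₘ,τ(wₘ))`. -/
def LAP {A Q T : Type} [DecidableEq Q] [DecidableEq A] [DecidableEq T] [Monoid T]
    (M : NFA' A Q) (τ : FreeMonoid Bool →* T) (ι : {x // x ∈ M.trans} → T) :
    Language (A ⊕ Bool) :=
  {w | ∃ (w₀ : List Bool) (l : List (A × List Bool)),
      w = w₀.map Sum.inr ++ (l.map (fun p => Sum.inl p.1 :: p.2.map Sum.inr)).flatten ∧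
      (l.map (fun p => (p.1, τ (FreeMonoid.ofList p.2)))) ∈ KAP M ι}

/-- The Brandt monoid on `Q`: `none` is the identity, `some none` is zero. -/
def BrM (Q : Type) : Type := Option (Option (Q × Q))

instance BrM.fintype (Q : Type) [Fintype Q] : Fintype (BrM Q) :=
  inferInstanceAs (Fintype (Option (Option (Q × Q))))

theorem BrM.card (Q : Type) [Fintype Q] : Fintype.card (BrM Q) = Fintype.card Q ^ 2 + 2 := by
  have : Fintype.card (BrM Q) = Fintype.card (Option (Option (Q × Q))) := rfl
  rw [this, Fintype.card_option, Fintype.card_option, Fintype.card_prod, sq]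

def BrM.mul {Q : Type} [DecidableEq Q] : Option (Option (Q × Q)) → Option (Option (Q × Q)) →
    Option (Option (Q × Q))
  | none, y => y
  | some x, none => some x
  | some none, some _ => some none
  | some (some _), some none => some none
  | some (some p), some (some q) => if p.2 = q.1 then some (some (p.1, q.2)) else some none

theorem BrM.assoc {Q : Type} [DecidableEq Q] (x y z : Option (Option (Q × Q))) :
    BrM.mul (BrM.mul x y) z = BrM.mul x (BrM.mul y z) := by
  rcases x with _ | _ | ⟨a, b⟩ <;> rcases y with _ | _ | ⟨c, d⟩ <;>
    rcases z with _ | _ | ⟨e, f⟩ <;> simp only [BrM.mul] <;> (try split_ifs) <;>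
    simp_all [BrM.mul]

instance BrM.monoid (Q : Type) [DecidableEq Q] : Monoid (BrM Q) where
  mul := BrM.mul
  one := (none : Option (Option (Q × Q)))
  mul_assoc := BrM.assoc
  one_mul x := rfl
  mul_one x := by
    change BrM.mul x none = x
    rcases x with _ | x <;> rfl

/-- The relation on `Q` denoted by an element of the Brandt monoid. -/
def BrM.rel {Q : Type} : Option (Option (Q × Q)) → Q → Q → Prop
  | none, q, r => q = r
  | some none, _, _ => False
  | some (some p), q, r => q = p.1 ∧ r = p.2

theorem BrM.rel_mul {Q : Type} [DecidableEq Q] (x y : BrM Q) (q r : Q) :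
    BrM.rel (x * y) q r ↔ ∃ m, BrM.rel x q m ∧ BrM.rel y m r := by
  change BrM.rel (BrM.mul x y) q r ↔ _
  rcases x with _ | _ | ⟨a, b⟩ <;> rcases y with _ | _ | ⟨c, d⟩ <;>
    simp only [BrM.mul] <;> (try split_ifs) <;> simp_all [BrM.rel]

open Classical in
noncomputable def ltrOf {A Q T : Type} (N : NFA' A Q) (ι : {x // x ∈ N.trans} → T)
    (p : A × T) : BrM Q :=
  if h : ∃ x : {x // x ∈ N.trans}, x.1.2.1 = p.1 ∧ ι x = p.2 then
    some (some (h.choose.1.1, h.choose.1.2.2)) else some none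

theorem ltrOf_rel {A Q T : Type} [DecidableEq A] [DecidableEq Q] [DecidableEq T]
    (N : NFA' A Q) (ι : {x // x ∈ N.trans} → T) (hι : Function.Injective ι)
    (p : A × T) (q r : Q) :
    BrM.rel (ltrOf N ι p) q r ↔ (q, p, r) ∈ (N.relabel ι).trans := by
  obtain ⟨a, t⟩ := p
  have key : (q, (a, t), r) ∈ (N.relabel ι).trans ↔
      ∃ x : {x // x ∈ N.trans}, x.1.1 = q ∧ (x.1.2.1 = a ∧ ι x = t) ∧ x.1.2.2 = r := by
    simp only [NFA'.relabel, Finset.mem_image, Finset.mem_attach, true_and, Prod.mk.injEq]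
  rw [key]
  by_cases h : ∃ x : {x // x ∈ N.trans}, x.1.2.1 = (a, t).1 ∧ ι x = (a, t).2
  · have e : ltrOf N ι (a, t) = some (some (h.choose.1.1, h.choose.1.2.2)) := dif_pos h
    rw [e]
    have hs := h.choose_spec
    constructor
    · rintro ⟨h1, h2⟩
      exact ⟨h.choose, h1.symm, hs, h2.symm⟩
    · rintro ⟨x, h1, h2, h3⟩
      have : h.choose = x := hι (hs.2.trans h2.2.symm)
      exact ⟨by rw [this, h1], by rw [this, h3]⟩
  · have e : ltrOf N ι (a, t) = some none := dif_neg h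
    rw [e]
    constructor
    · exact fun h' => False.elim h'
    · rintro ⟨x, h1, h2, h3⟩
      exact (h ⟨x, h2⟩).elim

theorem path_iff {A Q T : Type} [DecidableEq A] [DecidableEq Q] [DecidableEq T]
    (N : NFA' A Q) (ι : {x // x ∈ N.trans} → T) (hι : Function.Injective ι)
    (w : List (A × T)) (q r : Q) :
    (N.relabel ι).Path q w r ↔ BrM.rel ((w.map (ltrOf N ι)).prod : BrM Q) q r := by
  induction w generalizing q with
  | nil =>
    constructor
    · rintro ⟨⟩
      exact rfl
    · intro h
      have h' : q = r := h
      subst h'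
      exact .nil _
  | cons p w ih =>
    rw [List.map_cons, List.prod_cons, BrM.rel_mul]
    constructor
    · intro h
      cases h with
      | cons h1 h2 => exact ⟨_, (ltrOf_rel N ι hι _ _ _).2 h1, (ih _).1 h2⟩
    · rintro ⟨m, h1, h2⟩
      exact .cons ((ltrOf_rel N ι hι _ _ _).1 h1) ((ih _).2 h2)

/-- The underlying type of the recognizing monoid. -/
def BigM (A T S : Type) : Type := T ⊕ (T × S × A × T)

def BigM.mul {A T S : Type} [Monoid T] [Monoid S] (f : A × T → S) :
    T ⊕ (T × S × A × T) → T ⊕ (T × S × A × T) → T ⊕ (T × S × A × T)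
  | .inl t, .inl t' => .inl (t * t')
  | .inl t, .inr (x, s, a, y) => .inr (t * x, s, a, y)
  | .inr (x, s, a, y), .inl t => .inr (x, s, a, y * t)
  | .inr (x, s, a, y), .inr (x', s', a', y') => .inr (x, s * f (a, y * x') * s', a', y')

abbrev BigM.monoid {A T S : Type} [Monoid T] [Monoid S] (f : A × T → S) :
    Monoid (BigM A T S) where
  mul := BigM.mul f
  one := (Sum.inl 1 : T ⊕ (T × S × A × T))
  mul_assoc x y z := by
    change BigM.mul f (BigM.mul f x y) z = BigM.mul f x (BigM.mul f y z)
    rcases x with x | ⟨x, s, a, x'⟩ <;> rcases y with y | ⟨y, s', a', y'⟩ <;>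
      rcases z with z | ⟨z, s'', a'', z'⟩ <;> simp [BigM.mul, mul_assoc]
  one_mul x := by
    change BigM.mul f (Sum.inl 1) x = x
    rcases x with x | ⟨x, s, a, x'⟩ <;> simp [BigM.mul]
  mul_one x := by
    change BigM.mul f x (Sum.inl 1) = x
    rcases x with x | ⟨x, s, a, x'⟩ <;> simp [BigM.mul]

def BigM.ev {A T S : Type} [Monoid S] (f : A × T → S) : T ⊕ (T × S × A × T) → S
  | .inl _ => 1
  | .inr (_, s, a, y) => s * f (a, y)

theorem BigM.ev_mul {A T S : Type} [Monoid T] [Monoid S] (f : A × T → S)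
    (m : T ⊕ (T × S × A × T)) (a : A) (y : T) :
    BigM.ev f (BigM.mul f m (.inr (1, 1, a, y))) = BigM.ev f m * f (a, y) := by
  rcases m with x | ⟨x, s, a, x'⟩ <;> simp [BigM.mul, BigM.ev]

theorem exists_decomp {A : Type} (w : List (A ⊕ Bool)) :
    ∃ (w₀ : List Bool) (l : List (A × List Bool)),
      w = w₀.map Sum.inr ++ (l.map (fun p => Sum.inl p.1 :: p.2.map Sum.inr)).flatten := by
  induction w with
  | nil => exact ⟨[], [], rfl⟩
  | cons c w ih =>
    obtain ⟨w₀, l, rfl⟩ := ih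
    rcases c with a | b
    · exact ⟨[], (a, w₀) :: l, by simp⟩
    · exact ⟨b :: w₀, l, by simp⟩

theorem big_recognizes {A T S : Type} [Monoid T] [Monoid S] (f : A × T → S)
    (τ : FreeMonoid Bool →* T) :
    letI := BigM.monoid f
    ∃ α : FreeMonoid (A ⊕ Bool) →* BigM A T S, ∀ (w₀ : List Bool) (l : List (A × List Bool)),
      BigM.ev f (α (FreeMonoid.ofList (w₀.map Sum.inr ++
        (l.map (fun p => Sum.inl p.1 :: p.2.map Sum.inr)).flatten))) =
      ((l.map (fun p => (p.1, τ (FreeMonoid.ofList p.2)))).map f).prod := by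
  letI := BigM.monoid f
  let g : A ⊕ Bool → BigM A T S := fun c => match c with
    | .inl a => (Sum.inr (1, 1, a, 1) : T ⊕ (T × S × A × T))
    | .inr b => (Sum.inl (τ (FreeMonoid.of b)) : T ⊕ (T × S × A × T))
  let α := FreeMonoid.lift g
  have hα : ∀ c (w : List (A ⊕ Bool)),
      α (FreeMonoid.ofList (c :: w)) = g c * α (FreeMonoid.ofList w) := by
    intro c w
    rw [FreeMonoid.ofList_cons, map_mul, FreeMonoid.lift_eval_of]
  have hτ : ∀ v : List Bool, α (FreeMonoid.ofList (v.map Sum.inr)) =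
      (Sum.inl (τ (FreeMonoid.ofList v)) : T ⊕ (T × S × A × T)) := by
    intro v
    induction v with
    | nil =>
      change α 1 = (Sum.inl (τ 1) : T ⊕ (T × S × A × T))
      rw [map_one, map_one]; rfl
    | cons b v ih =>
      rw [List.map_cons, hα, ih, FreeMonoid.ofList_cons, map_mul]
      rfl
  refine ⟨α, fun w₀ l => ?_⟩
  induction l using List.reverseRecOn with
  | nil =>
    simp only [List.map_nil, List.flatten_nil, List.append_nil, List.prod_nil]
    rw [hτ]; rfl
  | append_singleton l p ih =>
    simp only [List.map_append, List.flatten_append, List.map_cons, List.map_nil,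
      List.flatten_cons, List.flatten_nil, List.append_nil, List.prod_append, List.prod_cons,
      List.prod_nil, mul_one]
    rw [← ih, ← List.append_assoc, FreeMonoid.ofList_append, map_mul, hα, hτ]
    have : BigM.mul f (g (Sum.inl p.1)) (Sum.inl (τ (FreeMonoid.ofList p.2))) =
        (Sum.inr (1, 1, p.1, τ (FreeMonoid.ofList p.2)) : T ⊕ (T × S × A × T)) := by
      simp [BigM.mul, g]
    exact (congrArg (fun z => BigM.ev f (BigM.mul f _ z)) this).trans (BigM.ev_mul f _ _ _)

theorem statement0 {A Q T : Type} [Fintype A] [DecidableEq A] [Fintype Q] [DecidableEq Q]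
    [Monoid T] [Fintype T] [DecidableEq T]
    (τ : FreeMonoid Bool →* T) (G : Finset T)
    (N : NFA' A Q) (hcompat : N.trans.card ≤ G.card)
    (ι : {x // x ∈ N.trans} → T) (hι : Function.Injective ι) (hιG : ∀ x, ι x ∈ G) :
    ∃ (M : Type) (_ : Monoid M) (_ : Fintype M) (α : FreeMonoid (A ⊕ Bool) →* M),
      Recognizes α (LAP N τ ι) ∧
      Fintype.card M ≤
        Fintype.card T +
          Fintype.card A * (Fintype.card T) ^ 2 * ((Fintype.card Q) ^ 2 + 2) := by
  letI := BigM.monoid (ltrOf N ι)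
  obtain ⟨α, hα⟩ := big_recognizes (ltrOf N ι) τ
  refine ⟨BigM A T (BrM Q), BigM.monoid (ltrOf N ι),
    inferInstanceAs (Fintype (T ⊕ (T × BrM Q × A × T))), α, ?_, ?_⟩
  · let acc : Set (BrM Q) := {s | ∃ q ∈ N.start, ∃ r ∈ N.accept, BrM.rel s q r}
    have hK : ∀ w, w ∈ KAP N ι ↔ (w.map (ltrOf N ι)).prod ∈ acc := by
      intro w
      change (∃ q ∈ N.start, ∃ r ∈ N.accept, (N.relabel ι).Path q w r) ↔
        ∃ q ∈ N.start, ∃ r ∈ N.accept, BrM.rel _ q r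
      simp only [path_iff N ι hι]
    refine ⟨{m | BigM.ev (ltrOf N ι) m ∈ acc}, ?_⟩
    ext w
    constructor
    · rintro ⟨w₀, l, rfl, h⟩
      change BigM.ev (ltrOf N ι) _ ∈ acc
      rw [hα]
      exact (hK _).1 h
    · intro h
      obtain ⟨w₀, l, rfl⟩ := exists_decomp w
      refine ⟨w₀, l, rfl, (hK _).2 ?_⟩
      rw [← hα w₀]
      exact h
  · have : Fintype.card (T ⊕ (T × BrM Q × A × T)) = Fintype.card T +
          Fintype.card A * (Fintype.card T) ^ 2 * ((Fintype.card Q) ^ 2 + 2) := by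
      rw [Fintype.card_sum, Fintype.card_prod, Fintype.card_prod, Fintype.card_prod, BrM.card]
      ring
    exact this.le
end

section
/- Let C and D be quotienting lattices of regular languages such that D extends C. Let A₁ and A₂ be two NFAs over an alphabet A, and let P be a tagging compatible with both A₁ and A₂ which fools D. Then L(A₁) is C(A)-separable from L(A₂) if and only if L[A₁,P] is D(A ∪ 𝔼)-separable from L[A₂,P]. -/
/-! Infrastructure: classes of languages (one set of languages for every finite
alphabet, alphabets being modelled as types), quotienting lattices, Boolean and
polynomial closure, separation, regular languages, recognition by monoid morphisms,
and the notions of extension and fooling tagging from the paper. The fixed two-letter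
alphabet `𝔼 = {0,1}` is modelled as `Bool`, and the disjoint union `A ∪ 𝔼` as the sum
type `A ⊕ Bool`. On `Language A` (which is `Set (List A)`) we use the lattice
operations `≤, ⊓, ⊔, ⊥` for `⊆, ∩, ∪, ∅`. -/

/-- A class of languages: to every alphabet it associates a set of languages. -/
abbrev LangClass : Type 1 := ∀ A : Type, Set (Language A)

/-- A language is regular when it is recognized by a DFA with finitely many states. -/
def IsRegularLang {A : Type} (L : Language A) : Prop :=
  ∃ (σ : Type) (_ : Fintype σ) (M : DFA A σ), M.accepts = L

/-- `C` is a lattice (of languages): each `C(A)` contains `∅` and `A*` and is closed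
under finite union and finite intersection. -/
def IsLatticeClass (C : LangClass) : Prop :=
  ∀ (A : Type) [Fintype A], (⊥ : Language A) ∈ C A ∧ (⊤ : Language A) ∈ C A ∧
    ∀ K L : Language A, K ∈ C A → L ∈ C A → K ⊔ L ∈ C A ∧ K ⊓ L ∈ C A

/-- `C` is quotienting: closed under left and right quotients by words. -/
def IsQuotienting (C : LangClass) : Prop :=
  ∀ (A : Type) [Fintype A], ∀ L ∈ C A, ∀ u : List A,
    {w : List A | u ++ w ∈ L} ∈ C A ∧ {w : List A | w ++ u ∈ L} ∈ C A

/-- `C` is closed under inverse images of monoid morphisms between free monoids. -/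
def ClosedInvImage (C : LangClass) : Prop :=
  ∀ (A B : Type) [Fintype A] [Fintype B] (φ : FreeMonoid A →* FreeMonoid B),
    ∀ L ∈ C B, {w : List A | FreeMonoid.toList (φ (FreeMonoid.ofList w)) ∈ L} ∈ C A

/-- Boolean closure: the least set of languages containing `S` and closed under
Boolean operations (union, intersection, complement). -/
inductive BoolClosure {A : Type} (S : Set (Language A)) : Language A → Prop
  | base {L : Language A} : L ∈ S → BoolClosure S L
  | compl {L : Language A} : BoolClosure S L → BoolClosure S Lᶜ
  | union {K L : Language A} : BoolClosure S K → BoolClosure S L → BoolClosure S (K ⊔ L)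
  | inter {K L : Language A} : BoolClosure S K → BoolClosure S L → BoolClosure S (K ⊓ L)

/-- Polynomial closure: the least set of languages containing `S` and closed under
finite union and marked concatenation `K a L`. -/
inductive PolClosure {A : Type} (S : Set (Language A)) : Language A → Prop
  | base {L : Language A} : L ∈ S → PolClosure S L
  | union {K L : Language A} : PolClosure S K → PolClosure S L → PolClosure S (K ⊔ L)
  | marked {K L : Language A} (a : A) :
      PolClosure S K → PolClosure S L → PolClosure S (K * {[a]} * L)

/-- Level `k/2` of the concatenation hierarchy of basis `C` (levels are counted in
half units: index `k` is level `k/2`, so `C[0] = C`, `C[n + 1/2] = Pol(C[n])` and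
`C[n + 1] = Bool(C[n + 1/2])`). -/
def hlevel (C : LangClass) : ℕ → LangClass
  | 0 => C
  | k + 1 => fun A =>
      if k % 2 = 0 then {L | PolClosure (hlevel C k A) L}
      else {L | BoolClosure (hlevel C k A) L}

/-- `L₁` is `𝒞`-separable from `L₂`: some `K ∈ 𝒞` includes `L₁` and is disjoint
from `L₂`. -/
def Separable {A : Type} (𝒞 : Set (Language A)) (L₁ L₂ : Language A) : Prop :=
  ∃ K ∈ 𝒞, L₁ ≤ K ∧ L₂ ⊓ K = ⊥

/-- `γ : (A ∪ 𝔼)* → A*`, the morphism erasing the letters of `𝔼`. -/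
def eraseE {A : Type} (w : List (A ⊕ Bool)) : List A :=
  w.filterMap (fun x => Sum.elim some (fun _ => none) x)

/-- `λᵤ : A* → (A ∪ 𝔼)*`, the morphism defined by `λᵤ(a) = a · u`. -/
def padWith {A : Type} (u : List Bool) (w : List A) : List (A ⊕ Bool) :=
  w.flatMap (fun a => Sum.inl a :: u.map Sum.inr)

/-- `D` is an extension of `C`. -/
def Extension (C D : LangClass) : Prop :=
  ∀ (A : Type) [Fintype A],
    (∀ K ∈ C A, {w : List (A ⊕ Bool) | eraseE w ∈ K} ∈ D (A ⊕ Bool)) ∧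
    (∀ u : List Bool, ∀ K ∈ D (A ⊕ Bool), {w : List A | padWith u w ∈ K} ∈ C A)

/-- The tagging `P = (τ : 𝔼* → T, G)` fools the class `D`. -/
def Fools {T : Type} [Monoid T] (τ : FreeMonoid Bool →* T) (G : Finset T)
    (D : LangClass) : Prop :=
  ∀ (A : Type) [Fintype A] (M : Type) [Monoid M] [Fintype M]
    (α : FreeMonoid (A ⊕ Bool) →* M),
    (∀ L : Language (A ⊕ Bool), Recognizes α L → BoolClosure (D (A ⊕ Bool)) L) →
    ∃ s : M, ∀ t ∈ G, ∃ w : List Bool,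
      α (FreeMonoid.ofList (w.map Sum.inr)) = s ∧ τ (FreeMonoid.ofList w) = t


theorem boolClosure_of_saturated {A : Type} (B : Set (Language A))
    (hbot : (⊥ : Language A) ∈ B) (htop : (⊤ : Language A) ∈ B)
    (S : Set (Language A)) (hS : S.Finite) :
    (∀ Q ∈ S, Q ∈ B) → ∀ L : Language A,
      (∀ w w' : List A, (∀ Q ∈ S, (w ∈ Q ↔ w' ∈ Q)) → w ∈ L → w' ∈ L) → BoolClosure B L := by
  induction S, hS using Set.Finite.induction_on with
  | empty =>
    intro _ L hL
    by_cases h : ∃ w, w ∈ L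
    · obtain ⟨w, hw⟩ := h
      have : L = ⊤ := by
        ext v
        refine ⟨fun _ => trivial, fun _ => hL w v (by simp) hw⟩
      rw [this]; exact .base htop
    · have : L = ⊥ := by
        ext v
        refine ⟨fun hv => (h ⟨v, hv⟩).elim, fun hv => hv.elim⟩
      rw [this]; exact .base hbot
  | @insert Q S _ _ ih =>
    intro hB L hL
    have key : ∀ P : List A → Prop, BoolClosure B
        ({w | ∃ w', P w' ∧ w' ∈ L ∧ ∀ R ∈ S, (w' ∈ R ↔ w ∈ R)} : Set (List A)) := by
      intro P
      apply ih (fun R hR => hB R (Set.mem_insert_of_mem _ hR))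
      rintro w w' hww ⟨v, hP, hv, hvw⟩
      exact ⟨v, hP, hv, fun R hR => (hvw R hR).trans (hww R hR)⟩
    have hQ : BoolClosure B Q := .base (hB Q (Set.mem_insert _ _))
    have := BoolClosure.union (.inter hQ (key (fun w => w ∈ Q)))
      (.inter (.compl hQ) (key (fun w => w ∉ Q)))
    convert this using 1
    ext w
    constructor
    · intro hw
      by_cases h : w ∈ Q
      · exact Or.inl ⟨h, w, h, hw, fun _ _ => Iff.rfl⟩
      · exact Or.inr ⟨h, w, h, hw, fun _ _ => Iff.rfl⟩
    · rintro (⟨h, v, hv, hvL, hvw⟩ | ⟨h, v, hv, hvL, hvw⟩)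
      · refine hL v w ?_ hvL
        intro R hR
        rcases hR with rfl | hR
        · exact ⟨fun _ => h, fun _ => hv⟩
        · exact hvw R hR
      · refine hL v w ?_ hvL
        intro R hR
        rcases hR with rfl | hR
        · exact ⟨fun h' => (hv h').elim, fun h' => (h h').elim⟩
        · exact hvw R hR

/-- The syntactic congruence of `K`. -/
def synCon {A : Type} (K : Language A) : Con (FreeMonoid A) where
  r x y := ∀ u v : List A, (u ++ x.toList ++ v ∈ K ↔ u ++ y.toList ++ v ∈ K)
  iseqv := ⟨fun _ _ _ => Iff.rfl, fun h u v => (h u v).symm,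
    fun h h' u v => (h u v).trans (h' u v)⟩
  mul' := by
    intro a b c d h h' u v
    have h1 := h u (c.toList ++ v)
    have h2 := h' (u ++ b.toList) v
    simp only [FreeMonoid.toList_mul, List.append_assoc] at *
    exact h1.trans h2

theorem synCon_rel {A : Type} (K : Language A) (x y : FreeMonoid A) :
    synCon K x y ↔ ∀ u v : List A, (u ++ x.toList ++ v ∈ K ↔ u ++ y.toList ++ v ∈ K) :=
  Iff.rfl

theorem synCon_finite {A : Type} (K : Language A) (hK : IsRegularLang K) :
    Finite (synCon K).Quotient := by
  obtain ⟨σ, _, M, rfl⟩ := hK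
  apply Finite.of_injective
    (fun x : (synCon M.accepts).Quotient => fun q : σ => M.evalFrom q (Quotient.out x).toList)
  intro x y hxy
  rw [← Quotient.out_eq x, ← Quotient.out_eq y]
  apply Quotient.sound
  intro u v
  simp only [DFA.mem_accepts, DFA.eval, DFA.evalFrom_of_append]
  have := congrFun hxy (M.evalFrom M.start u)
  simp only at this
  rw [this]

theorem quots_finite {A : Type} (K : Language A) (hK : IsRegularLang K) :
    (Set.range (fun p : List A × List A =>
      ({w | p.1 ++ w ++ p.2 ∈ K} : Language A))).Finite := by
  obtain ⟨σ, _, M, rfl⟩ := hK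
  apply (Set.finite_range (fun p : σ × Set σ =>
    ({w | M.evalFrom p.1 w ∈ p.2} : Language A))).subset
  rintro _ ⟨⟨u, v⟩, rfl⟩
  refine ⟨(M.eval u, {q | M.evalFrom q v ∈ M.accept}), ?_⟩
  ext w
  change M.evalFrom (M.eval u) w ∈ {q | M.evalFrom q v ∈ M.accept} ↔ u ++ w ++ v ∈ M.accepts
  rw [DFA.mem_accepts, DFA.eval, DFA.evalFrom_of_append, DFA.evalFrom_of_append]
  rfl

theorem recog_bool (D : LangClass) (hDlat : IsLatticeClass D) (hDquot : IsQuotienting D)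
    {A : Type} [Fintype A] (K : Language A) (hK : K ∈ D A) (hreg : IsRegularLang K)
    (L : Language A) (hL : Recognizes (synCon K).mk' L) : BoolClosure (D A) L := by
  obtain ⟨F, rfl⟩ := hL
  apply boolClosure_of_saturated (D A) (hDlat A).1 (hDlat A).2.1 _ (quots_finite K hreg)
  · rintro _ ⟨⟨u, v⟩, rfl⟩
    have h1 := (hDquot A K hK u).1
    have h2 := (hDquot A _ h1 v).2
    have e : ({w | u ++ w ++ v ∈ K} : Set (List A)) =
        {w | w ++ v ∈ ({w | u ++ w ∈ K} : Set (List A))} := by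
      ext w
      change u ++ w ++ v ∈ K ↔ u ++ (w ++ v) ∈ K
      rw [List.append_assoc]
    exact Eq.mpr (congrArg (fun X : Set (List A) => (D A) X) e) h2
  · intro w w' h hw
    have : (synCon K).mk' (FreeMonoid.ofList w) = (synCon K).mk' (FreeMonoid.ofList w') := by
      apply (Con.eq _).2
      intro u v
      exact h _ ⟨(u, v), rfl⟩
    change (synCon K).mk' (FreeMonoid.ofList w') ∈ F
    rw [← this]; exact hw

theorem path_of_relabel {A Q T : Type} [DecidableEq Q] [DecidableEq A] [DecidableEq T]
    (M : NFA' A Q) (ι : {x // x ∈ M.trans} → T) {q r : Q} {v : List (A × T)}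
    (h : (M.relabel ι).Path q v r) : M.Path q (v.map Prod.fst) r := by
  induction h with
  | nil q => exact .nil q
  | cons ht _ ih =>
    refine .cons ?_ ih
    simp only [NFA'.relabel, Finset.mem_image] at ht
    obtain ⟨⟨⟨x, y, z⟩, hx⟩, -, h⟩ := ht
    simp only [Prod.mk.injEq] at h
    obtain ⟨rfl, rfl, rfl⟩ := h
    exact hx

theorem relabel_of_path {A Q T : Type} [DecidableEq Q] [DecidableEq A] [DecidableEq T]
    [Monoid T] (τ : FreeMonoid Bool →* T) (G : Finset T)
    (M : NFA' A Q) (ι : {x // x ∈ M.trans} → T) (hG : ∀ x, ι x ∈ G)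
    (P : List Bool → Prop) (hP : ∀ t ∈ G, ∃ w, P w ∧ τ (FreeMonoid.ofList w) = t)
    {q r : Q} {w : List A} (h : M.Path q w r) :
    ∃ l : List (A × List Bool), l.map Prod.fst = w ∧ (∀ p ∈ l, P p.2) ∧
      (M.relabel ι).Path q (l.map (fun p => (p.1, τ (FreeMonoid.ofList p.2)))) r := by
  induction h with
  | nil q => exact ⟨[], rfl, by simp, .nil q⟩
  | @cons q r s a w ht _ ih =>
    obtain ⟨l, h1, h2, h3⟩ := ih
    obtain ⟨x, hx, hxt⟩ := hP _ (hG ⟨_, ht⟩)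
    refine ⟨(a, x) :: l, by simp [h1], ?_, ?_⟩
    · intro p hp
      rcases List.mem_cons.1 hp with rfl | hp
      · exact hx
      · exact h2 p hp
    · refine .cons ?_ h3
      simp only [NFA'.relabel, Finset.mem_image]
      exact ⟨⟨_, ht⟩, Finset.mem_attach _ _, by simp [hxt]⟩

theorem eraseE_map_inr {A : Type} (w : List Bool) :
    eraseE (w.map (Sum.inr : Bool → A ⊕ Bool)) = [] := by
  induction w with
  | nil => rfl
  | cons b w ih => simpa [eraseE] using ih

theorem eraseE_flatten {A : Type} (l : List (A × List Bool)) :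
    eraseE (l.map (fun p => Sum.inl p.1 :: p.2.map Sum.inr)).flatten = l.map Prod.fst := by
  induction l with
  | nil => rfl
  | cons p l ih =>
    have h := eraseE_map_inr (A := A) p.2
    simp only [eraseE] at *
    simp only [List.map_cons, List.flatten_cons, List.filterMap_append, List.cons_append,
      List.filterMap_cons, ih, h, Sum.elim_inl, List.nil_append]

theorem eraseE_LAP {A Q T : Type} [DecidableEq Q] [DecidableEq A] [DecidableEq T] [Monoid T]
    (M : NFA' A Q) (τ : FreeMonoid Bool →* T) (ι : {x // x ∈ M.trans} → T)
    (w : List (A ⊕ Bool)) (hw : w ∈ LAP M τ ι) : eraseE w ∈ M.lang := by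
  obtain ⟨w₀, l, rfl, q, hq, r, hr, h⟩ := hw
  have h' := path_of_relabel M ι h
  refine ⟨q, hq, r, hr, ?_⟩
  have e : eraseE (w₀.map Sum.inr ++
      (l.map (fun p => Sum.inl p.1 :: p.2.map Sum.inr)).flatten) = l.map Prod.fst := by
    have h1 := eraseE_map_inr (A := A) w₀
    have h2 := eraseE_flatten l
    unfold eraseE at *
    rw [List.filterMap_append, h1, h2, List.nil_append]
  rw [e]
  simpa [List.map_map, Function.comp_def] using h'

theorem pad_LAP {A Q T : Type} [DecidableEq Q] [DecidableEq A] [DecidableEq T]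
    [Monoid T] (τ : FreeMonoid Bool →* T) (G : Finset T)
    (N : NFA' A Q) (ι : {x // x ∈ N.trans} → T) (hG : ∀ x, ι x ∈ G)
    (K : Language (A ⊕ Bool)) (u : List Bool)
    (hu : ∀ t ∈ G, ∃ w : List Bool, synCon K (FreeMonoid.ofList (w.map Sum.inr))
      (FreeMonoid.ofList (u.map Sum.inr)) ∧ τ (FreeMonoid.ofList w) = t)
    (w : List A) (hw : w ∈ N.lang) :
    ∃ x ∈ LAP N τ ι, (x ∈ K ↔ padWith u w ∈ K) := by
  obtain ⟨q, hq, r, hr, h⟩ := hw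
  obtain ⟨l, rfl, h2, h3⟩ := relabel_of_path τ G N ι hG _ hu h
  refine ⟨(l.map (fun p => Sum.inl p.1 :: p.2.map Sum.inr)).flatten,
    ⟨[], l, by simp, q, hq, r, hr, h3⟩, ?_⟩
  have key : synCon K
      (FreeMonoid.ofList (l.map (fun p => Sum.inl p.1 :: p.2.map Sum.inr)).flatten)
      (FreeMonoid.ofList (padWith u (l.map Prod.fst))) := by
    clear h h3
    induction l with
    | nil => exact (synCon K).refl _
    | cons p l ih =>
      have i1 := ih (fun p hp => h2 p (List.mem_cons_of_mem _ hp))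
      have i2 := h2 p List.mem_cons_self
      exact (synCon K).mul
        ((synCon K).mul ((synCon K).refl (FreeMonoid.ofList [Sum.inl p.1])) i2) i1
  have := key [] []
  rw [List.append_nil, List.append_nil] at this
  exact this

theorem statement2
    (C D : LangClass)
    (hCreg : ∀ (A : Type) [Fintype A], ∀ L ∈ C A, IsRegularLang L)
    (hDreg : ∀ (A : Type) [Fintype A], ∀ L ∈ D A, IsRegularLang L)
    (hClat : IsLatticeClass C) (hCquot : IsQuotienting C)
    (hDlat : IsLatticeClass D) (hDquot : IsQuotienting D)
    (hext : Extension C D)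
    {A Q₁ Q₂ T : Type} [Fintype A] [DecidableEq A]
    [Fintype Q₁] [DecidableEq Q₁] [Fintype Q₂] [DecidableEq Q₂]
    [Monoid T] [Fintype T] [DecidableEq T]
    (τ : FreeMonoid Bool →* T) (G : Finset T)
    (N₁ : NFA' A Q₁) (N₂ : NFA' A Q₂)
    (hcompat₁ : N₁.trans.card ≤ G.card) (hcompat₂ : N₂.trans.card ≤ G.card)
    (ι₁ : {x // x ∈ N₁.trans} → T) (hι₁ : Function.Injective ι₁) (hι₁G : ∀ x, ι₁ x ∈ G)
    (ι₂ : {x // x ∈ N₂.trans} → T) (hι₂ : Function.Injective ι₂) (hι₂G : ∀ x, ι₂ x ∈ G)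
    (hfools : Fools τ G D) :
    Separable (C A) N₁.lang N₂.lang ↔
      Separable (D (A ⊕ Bool)) (LAP N₁ τ ι₁) (LAP N₂ τ ι₂) := by
  constructor
  · rintro ⟨K, hK, h1, h2⟩
    refine ⟨_, (hext A).1 K hK, ?_, ?_⟩
    · intro w hw
      exact h1 (eraseE_LAP N₁ τ ι₁ w hw)
    · ext w
      refine ⟨?_, fun h => h.elim⟩
      rintro ⟨hw, hw'⟩
      have : eraseE w ∈ N₂.lang ⊓ K := ⟨eraseE_LAP N₂ τ ι₂ w hw, hw'⟩
      rw [h2] at this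
      exact this.elim
  · rintro ⟨K, hK, h1, h2⟩
    have hreg := hDreg _ K hK
    haveI := synCon_finite K hreg
    letI := Fintype.ofFinite (synCon K).Quotient
    obtain ⟨s, hs⟩ := hfools A (synCon K).Quotient (synCon K).mk'
      (recog_bool D hDlat hDquot K hK hreg)
    have hu : ∃ u : List Bool, ∀ t ∈ G, ∃ w : List Bool,
        synCon K (FreeMonoid.ofList (w.map Sum.inr))
          (FreeMonoid.ofList (u.map Sum.inr)) ∧ τ (FreeMonoid.ofList w) = t := by
      rcases G.eq_empty_or_nonempty with rfl | ⟨t₀, ht₀⟩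
      · exact ⟨[], by simp⟩
      · obtain ⟨u, hu, -⟩ := hs t₀ ht₀
        refine ⟨u, fun t ht => ?_⟩
        obtain ⟨w, hw, hwt⟩ := hs t ht
        exact ⟨w, (Con.eq _).1 (hw.trans hu.symm), hwt⟩
    obtain ⟨u, hu⟩ := hu
    refine ⟨_, (hext A).2 u K hK, ?_, ?_⟩
    · intro w hw
      obtain ⟨x, hx, hxK⟩ := pad_LAP τ G N₁ ι₁ hι₁G K u hu w hw
      exact hxK.1 (h1 hx)
    · ext w
      refine ⟨?_, fun h => h.elim⟩
      rintro ⟨hw, hw'⟩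
      obtain ⟨x, hx, hxK⟩ := pad_LAP τ G N₂ ι₂ hι₂G K u hu w hw
      have : x ∈ LAP N₂ τ ι₂ ⊓ K := ⟨hx, hxK.2 hw'⟩
      rw [h2] at this
      exact this.elim
end

section
/- Let C be a finite quotienting Boolean algebra of regular languages. For every level n ∈ ½ℕ of the concatenation hierarchies of bases C and C_𝔼, the class C_𝔼[n] is an extension of C[n]. -/
/-- `C` is a quotienting Boolean algebra: a quotienting lattice closed under
complement. -/
def IsQBA (C : LangClass) : Prop :=
  IsLatticeClass C ∧ IsQuotienting C ∧
    ∀ (A : Type) [Fintype A], ∀ L ∈ C A, Lᶜ ∈ C A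

/-- `C` is a finite class: `C(A)` is a finite set for every alphabet. -/
def IsFiniteClass (C : LangClass) : Prop :=
  ∀ (A : Type) [Fintype A], (C A).Finite

/-- The class `C_𝔼`, defined on the alphabets `A ∪ 𝔼`:
`C_𝔼(A ∪ 𝔼) = {γ⁻¹(L) | L ∈ C(A)}` where `γ` erases the letters of `𝔼`. -/
def Ctag (C : LangClass) (A : Type) : Set (Language (A ⊕ Bool)) :=
  {L | ∃ K ∈ C A, L = {w : List (A ⊕ Bool) | eraseE w ∈ K}}

/-- Level `k/2` of the concatenation hierarchy of a basis defined on the alphabets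
`A ∪ 𝔼` (such as `C_𝔼`); indexing as in `hlevel`. -/
def hlevelS (D : ∀ A : Type, Set (Language (A ⊕ Bool))) :
    ℕ → ∀ A : Type, Set (Language (A ⊕ Bool))
  | 0 => D
  | k + 1 => fun A =>
      if k % 2 = 0 then {L | PolClosure (hlevelS D k A) L}
      else {L | BoolClosure (hlevelS D k A) L}

/-- `D` (a class defined on the alphabets `A ∪ 𝔼`) is an extension of `C`. -/
def ExtensionS (C : LangClass) (D : ∀ A : Type, Set (Language (A ⊕ Bool))) : Prop :=
  ∀ (A : Type) [Fintype A],
    (∀ K ∈ C A, {w : List (A ⊕ Bool) | eraseE w ∈ K} ∈ D A) ∧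
    (∀ u : List Bool, ∀ K ∈ D A, {w : List A | padWith u w ∈ K} ∈ C A)

/-- The tagging `P = (τ : 𝔼* → T, G)` fools the class `D` (defined on the alphabets
`A ∪ 𝔼`). -/
def FoolsS {T : Type} [Monoid T] (τ : FreeMonoid Bool →* T) (G : Finset T)
    (D : ∀ A : Type, Set (Language (A ⊕ Bool))) : Prop :=
  ∀ (A : Type) [Fintype A] (M : Type) [Monoid M] [Fintype M]
    (α : FreeMonoid (A ⊕ Bool) →* M),
    (∀ L : Language (A ⊕ Bool), Recognizes α L → BoolClosure (D A) L) →
    ∃ s : M, ∀ t ∈ G, ∃ w : List Bool,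
      α (FreeMonoid.ofList (w.map Sum.inr)) = s ∧ τ (FreeMonoid.ofList w) = t

theorem mem_marked {A : Type} (K L : Language A) (a : A) (w : List A) :
    w ∈ K * {[a]} * L ↔ ∃ k ∈ K, ∃ l ∈ L, w = k ++ a :: l := by
  constructor
  · intro h
    obtain ⟨v, hv, l, hl, rfl⟩ := Language.mem_mul.1 h
    obtain ⟨k, hk, c, hc, rfl⟩ := Language.mem_mul.1 hv
    have hc' : c = [a] := hc
    subst hc'
    exact ⟨k, hk, l, hl, by simp⟩
  · rintro ⟨k, hk, l, hl, rfl⟩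
    exact Language.mem_mul.2 ⟨k ++ [a], Language.mem_mul.2 ⟨k, hk, [a], rfl, rfl⟩, l, hl, by simp⟩

theorem append_split {B : Type} (X Y k l : List B) (a : B) (h : X ++ Y = k ++ a :: l) :
    (∃ q, X = k ++ a :: q ∧ l = q ++ Y) ∨ (∃ p, Y = p ++ a :: l ∧ k = X ++ p) := by
  rcases List.append_eq_append_iff.1 h with ⟨p, h1, h2⟩ | ⟨c, h1, h2⟩
  · exact Or.inr ⟨p, h2, h1⟩
  · cases c with
    | nil => exact Or.inr ⟨[], by simpa using h2.symm, by simpa using h1.symm⟩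
    | cons d c =>
      simp only [List.cons_append, List.cons.injEq] at h2
      obtain ⟨rfl, h2⟩ := h2
      exact Or.inl ⟨c, h1, h2⟩

theorem padWith_cons {A : Type} (u : List Bool) (b : A) (w : List A) :
    padWith u (b :: w) = (Sum.inl b :: u.map Sum.inr) ++ padWith u w := rfl

theorem padWith_append {A : Type} (u : List Bool) (v w : List A) :
    padWith u (v ++ w) = padWith u v ++ padWith u w := by
  simp [padWith]

theorem padWith_split {A : Type} (u : List Bool) (a : A ⊕ Bool) (w : List A) :
    ∀ p q, padWith u w = p ++ a :: q → ∃ b w1 w2 p' q', w = w1 ++ b :: w2 ∧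
      (Sum.inl b :: u.map Sum.inr) = p' ++ a :: q' ∧ p = padWith u w1 ++ p' ∧
      q = q' ++ padWith u w2 := by
  induction w with
  | nil => intro p q h; simp [padWith] at h
  | cons b w ih =>
    intro p q h
    rw [padWith_cons] at h
    rcases append_split _ _ _ _ _ h with ⟨q', h1, h2⟩ | ⟨p', h1, h2⟩
    · exact ⟨b, [], w, p, q', rfl, h1, rfl, h2⟩
    · obtain ⟨c, w1, w2, p2, q2, rfl, h3, rfl, h5⟩ := ih _ _ h1
      exact ⟨c, b :: w1, w2, p2, q2, rfl, h3, by rw [h2, padWith_cons]; simp, h5⟩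

theorem eraseE_append {A : Type} (v w : List (A ⊕ Bool)) :
    eraseE (v ++ w) = eraseE v ++ eraseE w := by
  simp [eraseE]

theorem eraseE_padWith {A : Type} (u : List Bool) (w : List A) :
    eraseE (padWith u w) = w := by
  induction w with
  | nil => rfl
  | cons b w ih =>
    rw [padWith_cons, eraseE_append, ih]
    simp [eraseE, List.filterMap_map, Function.comp_def]

theorem eraseE_split {A : Type} (a : A) (w : List (A ⊕ Bool)) :
    ∀ k l, eraseE w = k ++ a :: l →
      ∃ k' l', w = k' ++ Sum.inl a :: l' ∧ eraseE k' = k ∧ eraseE l' = l := by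
  induction w with
  | nil => intro k l h; simp [eraseE] at h
  | cons c w ih =>
    intro k l h
    rcases c with c | c
    · have h' : c :: eraseE w = k ++ a :: l := h
      cases k with
      | nil =>
        simp only [List.nil_append, List.cons.injEq] at h'
        obtain ⟨rfl, h'⟩ := h'
        exact ⟨[], w, rfl, rfl, h'⟩
      | cons d k =>
        simp only [List.cons_append, List.cons.injEq] at h'
        obtain ⟨rfl, h'⟩ := h'
        obtain ⟨k', l', rfl, rfl, rfl⟩ := ih _ _ h'
        exact ⟨Sum.inl c :: k', l', rfl, rfl, rfl⟩
    · obtain ⟨k', l', rfl, rfl, rfl⟩ := ih _ _ h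
      exact ⟨Sum.inr c :: k', l', rfl, rfl, rfl⟩

theorem splits_finite {B : Type} (x : List B) (a : B) :
    {pq : List B × List B | x = pq.1 ++ a :: pq.2}.Finite := by
  refine ((Set.finite_Iic x.length).image (fun n => (x.take n, x.drop (n+1)))).subset ?_
  rintro ⟨p, q⟩ h
  have h' : x = p ++ a :: q := h
  subst h'
  exact ⟨p.length, by simp, by simp [List.drop_append]⟩

theorem prop_of_ext {A : Type} (P : Language A → Prop) {K L : Language A} (h : P L)
    (e : ∀ w : List A, w ∈ K ↔ w ∈ L) : P K := by
  have : K = L := Set.ext e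
  rwa [this]

theorem pol_biUnion {A ι : Type} {T : Set (Language A)} (hbot : (⊥ : Language A) ∈ T)
    {s : Set ι} (hs : s.Finite) (f : ι → Language A) :
    (∀ i ∈ s, PolClosure T (f i)) → PolClosure T ({w | ∃ i ∈ s, w ∈ f i} : Set (List A)) := by
  induction s, hs using Set.Finite.induction_on with
  | empty =>
    intro _
    refine prop_of_ext (PolClosure T) (PolClosure.base hbot) fun w => ?_
    exact ⟨fun ⟨i, hi, _⟩ => hi.elim, fun h => h.elim⟩
  | @insert i s _ _ ih =>
    intro h
    refine prop_of_ext (PolClosure T) (PolClosure.union (h i (Set.mem_insert _ _))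
      (ih fun j hj => h j (Set.mem_insert_of_mem _ hj))) fun w => ?_
    constructor
    · rintro ⟨j, rfl | hj, hw⟩
      · exact Or.inl hw
      · exact Or.inr ⟨j, hj, hw⟩
    · rintro (hw | ⟨j, hj, hw⟩)
      · exact ⟨i, Set.mem_insert _ _, hw⟩
      · exact ⟨j, Set.mem_insert_of_mem _ hj, hw⟩

/-- Inverse image of a two-sided quotient under `padWith u`. -/
def padQ {A : Type} (u : List Bool) (x y : List (A ⊕ Bool)) (L : Language (A ⊕ Bool)) :
    Language A := ({w | x ++ padWith u w ++ y ∈ L} : Set (List A))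

theorem pol_padQ {A : Type} [Fintype A] (u : List Bool) {S : Set (Language (A ⊕ Bool))}
    {T : Set (Language A)} (hbot : (⊥ : Language A) ∈ T)
    (h : ∀ K ∈ S, ∀ x y, padQ u x y K ∈ T) {L : Language (A ⊕ Bool)} (hL : PolClosure S L) :
    ∀ x y, PolClosure T (padQ u x y L) := by
  induction hL with
  | base hL => exact fun x y => .base (h _ hL x y)
  | union _ _ ih1 ih2 => exact fun x y => .union (ih1 x y) (ih2 x y)
  | @marked K L a _ _ ih1 ih2 =>
    intro x y
    have P1 := pol_biUnion hbot
      ((splits_finite x a).subset (Set.sep_subset _ (fun pq => pq.1 ∈ K)))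
      (fun pq => padQ u pq.2 y L) (fun pq _ => ih2 _ _)
    have P2 := pol_biUnion hbot
      ((splits_finite y a).subset (Set.sep_subset _ (fun pq => pq.2 ∈ L)))
      (fun pq => padQ u x pq.1 K) (fun pq _ => ih1 _ _)
    have P3 := pol_biUnion hbot (Set.finite_univ (α := A))
      (fun b => ({w | ∃ pq ∈ {pq : List (A ⊕ Bool) × List (A ⊕ Bool) |
          (Sum.inl b :: u.map Sum.inr) = pq.1 ++ a :: pq.2},
          w ∈ padQ u x pq.1 K * {[b]} * padQ u pq.2 y L} : Set (List A)))
      (fun b _ => pol_biUnion hbot (splits_finite (Sum.inl b :: u.map Sum.inr) a) _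
        (fun pq _ => PolClosure.marked b (ih1 x pq.1) (ih2 pq.2 y)))
    convert PolClosure.union P1 (PolClosure.union P2 P3) using 1
    ext w
    constructor
    · intro hw
      obtain ⟨k, hk, l, hl, e⟩ := (mem_marked _ _ _ _).1 hw
      rcases append_split _ _ _ _ _ e with ⟨q, e1, rfl⟩ | ⟨p, e1, rfl⟩
      · rcases append_split _ _ _ _ _ e1 with ⟨q', e2, rfl⟩ | ⟨p, e2, rfl⟩
        · exact Or.inl ⟨(k, q'), ⟨e2, hk⟩, hl⟩
        · obtain ⟨b, w1, w2, p', q', rfl, e3, rfl, rfl⟩ := padWith_split u a w _ _ e2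
          refine Or.inr (Or.inr ⟨b, trivial, (p', q'), e3, (mem_marked _ _ _ _).2
            ⟨w1, ?_, w2, hl, rfl⟩⟩)
          show x ++ padWith u w1 ++ p' ∈ K
          rwa [List.append_assoc]
      · exact Or.inr (Or.inl ⟨(p, l), ⟨e1, hl⟩, hk⟩)
    · rintro (⟨⟨p, q⟩, ⟨e, hp⟩, hw⟩ | ⟨⟨p, q⟩, ⟨e, hq⟩, hw⟩ | ⟨b, _, ⟨p, q⟩, e, hw⟩)
      · have e' : x = p ++ a :: q := e
        exact (mem_marked _ _ _ _).2 ⟨p, hp, _, hw, by rw [e']; simp⟩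
      · have e' : y = p ++ a :: q := e
        exact (mem_marked _ _ _ _).2 ⟨_, hw, q, hq, by rw [e']; simp⟩
      · obtain ⟨w1, h1, w2, h2, rfl⟩ := (mem_marked _ _ _ _).1 hw
        have e' : (Sum.inl b :: u.map Sum.inr) = p ++ a :: q := e
        refine (mem_marked _ _ _ _).2 ⟨_, h1, _, h2, ?_⟩
        rw [padWith_append, padWith_cons, e']
        simp

theorem bool_padQ {A : Type} (u : List Bool) {S : Set (Language (A ⊕ Bool))}
    {T : Set (Language A)}
    (h : ∀ K ∈ S, ∀ x y, padQ u x y K ∈ T) {L : Language (A ⊕ Bool)} (hL : BoolClosure S L) :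
    ∀ x y, BoolClosure T (padQ u x y L) := by
  induction hL with
  | base hL => exact fun x y => .base (h _ hL x y)
  | compl _ ih => exact fun x y => .compl (ih x y)
  | union _ _ ih1 ih2 => exact fun x y => .union (ih1 x y) (ih2 x y)
  | inter _ _ ih1 ih2 => exact fun x y => .inter (ih1 x y) (ih2 x y)

/-- Inverse image under `eraseE`. -/
def erInv {A : Type} (L : Language A) : Language (A ⊕ Bool) :=
  ({w | eraseE w ∈ L} : Set (List (A ⊕ Bool)))

theorem pol_erInv {A : Type} {S : Set (Language (A ⊕ Bool))} {T : Set (Language A)}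
    (h : ∀ K ∈ T, erInv K ∈ S) {L : Language A} (hL : PolClosure T L) :
    PolClosure S (erInv L) := by
  induction hL with
  | base hL => exact .base (h _ hL)
  | union _ _ ih1 ih2 => exact .union ih1 ih2
  | @marked K L a _ _ ih1 ih2 =>
    convert PolClosure.marked (Sum.inl a) ih1 ih2 using 1
    ext w
    constructor
    · intro hw
      obtain ⟨k, hk, l, hl, e⟩ := (mem_marked _ _ _ _).1 hw
      obtain ⟨k', l', rfl, rfl, rfl⟩ := eraseE_split _ _ _ _ e
      exact (mem_marked _ _ _ _).2 ⟨k', hk, l', hl, rfl⟩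
    · intro hw
      obtain ⟨k, hk, l, hl, rfl⟩ := (mem_marked _ _ _ _).1 hw
      exact (mem_marked _ _ _ _).2 ⟨_, hk, _, hl, eraseE_append _ _⟩

theorem bool_erInv {A : Type} {S : Set (Language (A ⊕ Bool))} {T : Set (Language A)}
    (h : ∀ K ∈ T, erInv K ∈ S) {L : Language A} (hL : BoolClosure T L) :
    BoolClosure S (erInv L) := by
  induction hL with
  | base hL => exact .base (h _ hL)
  | compl _ ih => exact .compl ih
  | union _ _ ih1 ih2 => exact .union ih1 ih2
  | inter _ _ ih1 ih2 => exact .inter ih1 ih2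

theorem levels_main (C : LangClass) (hqba : IsQBA C) (A : Type) [Fintype A] (n : ℕ) :
    (⊥ : Language A) ∈ hlevel C n A ∧
    (∀ K ∈ hlevel C n A, erInv K ∈ hlevelS (Ctag C) n A) ∧
    (∀ u, ∀ K ∈ hlevelS (Ctag C) n A, ∀ x y, padQ u x y K ∈ hlevel C n A) := by
  induction n with
  | zero =>
    refine ⟨(hqba.1 A).1, fun K hK => ⟨K, hK, rfl⟩, ?_⟩
    rintro u _ ⟨K, hK, rfl⟩ x y
    have h1 := (hqba.2.1 A K hK (eraseE x)).1
    have h2 := (hqba.2.1 A _ h1 (eraseE y)).2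
    refine prop_of_ext (· ∈ C A) h2 fun w => ?_
    show eraseE (x ++ padWith u w ++ y) ∈ K ↔ eraseE x ++ (w ++ eraseE y) ∈ K
    rw [eraseE_append, eraseE_append, eraseE_padWith, List.append_assoc]
  | succ k ih =>
    obtain ⟨h0, h1, h2⟩ := ih
    simp only [hlevel, hlevelS]
    split_ifs
    · exact ⟨.base h0, fun K hK => pol_erInv h1 hK, fun u K hK => pol_padQ u h0 (h2 u) hK⟩
    · exact ⟨.base h0, fun K hK => bool_erInv h1 hK, fun u K hK => bool_padQ u (h2 u) hK⟩

theorem statement6 (C : LangClass) (hqba : IsQBA C) (hfin : IsFiniteClass C)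
    (hreg : ∀ (A : Type) [Fintype A], ∀ L ∈ C A, IsRegularLang L) (n : ℕ) :
    ExtensionS (hlevel C n) (hlevelS (Ctag C) n) := by
  intro A _
  obtain ⟨_, h1, h2⟩ := levels_main C hqba A n
  refine ⟨h1, fun u K hK => ?_⟩
  refine prop_of_ext (· ∈ hlevel C n A) (h2 u K hK [] []) fun w => ?_
  show padWith u w ∈ K ↔ [] ++ padWith u w ++ [] ∈ K
  simp
end

section
/- Let A be an alphabet, let α: A* → M and β: A* → N be AT-compatible morphisms, and let S ⊆ N be a good subset. Then every pair (s,T) ∈ M × 2^N which is the root label of some (α,β,S)-tree is alphabet safe, i.e. alph(s) = alph(t) for every t ∈ T. -/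
open scoped Pointwise

/-! Infrastructure: the class `AT` of alphabet testable languages has canonical
equivalence `u ∼_AT v ↔ alph(u) = alph(v)`, so that `A*/∼_AT` is the monoid
`(2^A, ∪)` and `[w]_AT = alph(w)`. `AT`-compatible morphisms, good subsets and
`(α,β,S)`-trees (represented through the inductive predicate describing the possible
root labels). -/

/-- The monoid `(2^A, ∪)` of subsets of `A` under union (with neutral element `∅`);
this is the monoid `A*/∼_AT`. -/
def UnionMonoid (A : Type) : Type := Set A

instance (A : Type) : Monoid (UnionMonoid A) where
  mul s t := (s ∪ t : Set A)
  one := (∅ : Set A)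
  mul_assoc s t u := Set.union_assoc s t u
  one_mul s := Set.empty_union s
  mul_one s := Set.union_empty s

/-- `alph(w)`: the set of letters occurring in the word `w`, as an element of the
monoid `(2^A, ∪)`. -/
def alphOf {A : Type} (w : List A) : UnionMonoid A :=
  ({a | a ∈ w} : Set A)

/-- `S ⊆ N` is good (for `β`) when it contains `β(A*)` and is closed under
multiplication. -/
def GoodSubset {A N : Type} [Monoid N] (β : FreeMonoid A →* N) (S : Set N) : Prop :=
  (∀ w : FreeMonoid A, β w ∈ S) ∧ ∀ s ∈ S, ∀ t ∈ S, s * t ∈ S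

/-- `TreeRoot α β clM clN S s T` holds exactly when `(s,T) ∈ M × 2^N` is the root
label of some `(α,β,S)`-tree; here `clM, clN` are the morphisms `s ↦ alph(s)` coming
with the `AT`-compatibility of `α` and `β`. The three constructors correspond to the
three kinds of nodes (leaves, binary nodes and `S`-operation nodes). -/
inductive TreeRoot {A M N Q : Type} [Monoid M] [Monoid N] [Monoid Q]
    (α : FreeMonoid A →* M) (β : FreeMonoid A →* N)
    (clM : M →* Q) (clN : N →* Q) (S : Set N) : M → Set N → Prop
  | leaf (w : FreeMonoid A) : TreeRoot α β clM clN S (α w) {β w}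
  | binary {s₁ : M} {T₁ : Set N} {s₂ : M} {T₂ : Set N} (T : Set N) :
      TreeRoot α β clM clN S s₁ T₁ → TreeRoot α β clM clN S s₂ T₂ →
      T ⊆ T₁ * T₂ → TreeRoot α β clM clN S (s₁ * s₂) T
  | op {e : M} {E : Set N} (T : Set N) :
      TreeRoot α β clM clN S e E → e * e = e → E * E = E →
      T ⊆ E * {t | t ∈ S ∧ clM e = clN t} * E →
      TreeRoot α β clM clN S e T

/-- Every root label `(s,T)` of an `(α,β,S)`-tree (for `AT`-compatible `α, β` and a
good subset `S`) is alphabet safe: `alph(t) = alph(s)` for every `t ∈ T`. -/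
theorem statement12 {A : Type} [Fintype A]
    {M N : Type} [Monoid M] [Fintype M] [Monoid N] [Fintype N]
    (α : FreeMonoid A →* M) (β : FreeMonoid A →* N)
    (clM : M →* UnionMonoid A)
    (hclM : ∀ w : FreeMonoid A, clM (α w) = alphOf (FreeMonoid.toList w))
    (clN : N →* UnionMonoid A)
    (hclN : ∀ w : FreeMonoid A, clN (β w) = alphOf (FreeMonoid.toList w))
    (S : Set N) (hS : GoodSubset β S)
    (s : M) (T : Set N) (htree : TreeRoot α β clM clN S s T) :
    ∀ t ∈ T, clN t = clM s := by
  induction htree with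
  | leaf w =>
    intro t ht
    rw [Set.mem_singleton_iff.mp ht, hclN, hclM]
  | binary T _ _ hT ih₁ ih₂ =>
    intro t ht
    obtain ⟨a, ha, b, hb, rfl⟩ := Set.mem_mul.mp (hT ht)
    rw [map_mul, map_mul, ih₁ a ha, ih₂ b hb]
  | op T _ he _ hT ih =>
    intro t ht
    obtain ⟨x, hx, b, hb, rfl⟩ := Set.mem_mul.mp (hT ht)
    obtain ⟨a, ha, c, hc, rfl⟩ := Set.mem_mul.mp hx
    rw [map_mul, map_mul, ih a ha, ih b hb, ← hc.2, ← map_mul, ← map_mul, he, he]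
end
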